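/- Let θ₁, θ₂ ∈ ℝ satisfy sin θ₁ ≠ 0, sin θ₂ ≠ 0, and cos θ₁ ≠ cos θ₂ (so that the eigenvalues e^{±iθ₁}, e^{±iθ₂} are pairwise distinct). Then the centralizer of r(θ₁,θ₂) in Sp(4,ℝ) is exactly {r(φ₁,φ₂) : φ₁, φ₂ ∈ ℝ}, i.e., the full compact torus; in particular it is isomorphic to S¹ × S¹. -/

import Mathlib

open Matrix Real

noncomputable section

/-- Build a 4×4 real matrix from four 2×2 blocks. -/
def bm (A B C D : Matrix (Fin 2) (Fin 2) ℝ) : Matrix (Fin 4) (Fin 4) ℝ :=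
  Matrix.reindex finSumFinEquiv finSumFinEquiv (Matrix.fromBlocks A B C D)

/-- The standard symplectic form matrix J = [[0, I₂], [−I₂, 0]]. -/
def J4 : Matrix (Fin 4) (Fin 4) ℝ := bm 0 1 (-1) 0

/-- Membership in Sp(4,ℝ): ᵗg·J·g = J. -/
def IsSymp (g : Matrix (Fin 4) (Fin 4) ℝ) : Prop := gᵀ * J4 * g = J4

/-- The compact torus element r(θ₁,θ₂) = [[C, S], [−S, C]] with
C = diag(cos θ₁, cos θ₂), S = diag(sin θ₁, sin θ₂). -/
def rot (θ₁ θ₂ : ℝ) : Matrix (Fin 4) (Fin 4) ℝ :=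
  bm (Matrix.diagonal ![Real.cos θ₁, Real.cos θ₂]) (Matrix.diagonal ![Real.sin θ₁, Real.sin θ₂])
    (-(Matrix.diagonal ![Real.sin θ₁, Real.sin θ₂])) (Matrix.diagonal ![Real.cos θ₁, Real.cos θ₂])

def tor (a b c d : ℝ) : Matrix (Fin 4) (Fin 4) ℝ :=
  !![a, 0, b, 0; 0, c, 0, d; -b, 0, a, 0; 0, -d, 0, c]

theorem bm_eq (A B C D : Matrix (Fin 2) (Fin 2) ℝ) : bm A B C D =
    !![A 0 0, A 0 1, B 0 0, B 0 1; A 1 0, A 1 1, B 1 0, B 1 1;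
       C 0 0, C 0 1, D 0 0, D 0 1; C 1 0, C 1 1, D 1 0, D 1 1] := by
  ext i j
  fin_cases i <;> fin_cases j <;> rfl

theorem rot_eq (x y : ℝ) : rot x y = tor (cos x) (sin x) (cos y) (sin y) := by
  simp [rot, bm_eq, tor]

theorem J4_eq : J4 = tor 0 1 0 1 := by
  simp [J4, bm_eq, tor]

theorem tor_mul (a b c d a' b' c' d' : ℝ) : tor a b c d * tor a' b' c' d' =
    tor (a * a' - b * b') (a * b' + b * a') (c * c' - d * d') (c * d' + d * c') := by
  ext i j
  fin_cases i <;> fin_cases j <;> simp [tor, Matrix.mul_apply, Fin.sum_univ_four] <;> ring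

theorem tor_transpose (a b c d : ℝ) : (tor a b c d)ᵀ = tor a (-b) c (-d) := by
  ext i j
  fin_cases i <;> fin_cases j <;> simp [tor]

theorem tor_symp (a b c d : ℝ) (h : a ^ 2 + b ^ 2 = 1) (h' : c ^ 2 + d ^ 2 = 1) :
    IsSymp (tor a b c d) := by
  rw [IsSymp, J4_eq, tor_transpose, tor_mul, tor_mul]
  congr 1 <;> linarith

theorem tor_symp_inv (a b c d : ℝ) (h : IsSymp (tor a b c d)) :
    a ^ 2 + b ^ 2 = 1 ∧ c ^ 2 + d ^ 2 = 1 := by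
  rw [IsSymp, J4_eq, tor_transpose, tor_mul, tor_mul] at h
  have e := congrFun (congrFun h 0) 2
  have e' := congrFun (congrFun h 1) 3
  simp [tor] at e e'
  constructor <;> linarith

theorem aux (d s t x w : ℝ) (hd : d ≠ 0) (h : (d ^ 2 + s ^ 2 + t ^ 2) * x = 2 * s * t * w)
    (h' : (d ^ 2 + s ^ 2 + t ^ 2) * w = 2 * s * t * x) : x = 0 ∧ w = 0 := by
  have hp : 0 < d ^ 2 := by positivity
  have e1 : (d ^ 2 + (s + t) ^ 2) * (x - w) = 0 := by linear_combination h - h'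
  have e2 : (d ^ 2 + (s - t) ^ 2) * (x + w) = 0 := by linear_combination h + h'
  have n1 : d ^ 2 + (s + t) ^ 2 ≠ 0 := by positivity
  have n2 : d ^ 2 + (s - t) ^ 2 ≠ 0 := by positivity
  have f1 := (mul_eq_zero.mp e1).resolve_left n1
  have f2 := (mul_eq_zero.mp e2).resolve_left n2
  constructor <;> linarith

theorem off (p q s t x y z w : ℝ) (hd : q - p ≠ 0)
    (e1 : x * q - y * t = p * x + s * z) (e2 : x * t + y * q = p * y + s * w)
    (e3 : z * q - w * t = -s * x + p * z) (e4 : z * t + w * q = -s * y + p * w) :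
    x = 0 ∧ y = 0 ∧ z = 0 ∧ w = 0 := by
  obtain ⟨hx, hw⟩ := aux (q - p) s t x w hd
    (by linear_combination (q - p) * e1 + t * e2 + s * e3)
    (by linear_combination (q - p) * e4 - t * e3 - s * e2)
  obtain ⟨hy, hz⟩ := aux (q - p) s (-t) y z hd
    (by linear_combination (q - p) * e2 - t * e1 + s * e4)
    (by linear_combination (q - p) * e3 + t * e4 - s * e1)
  exact ⟨hx, hy, hz, hw⟩

theorem dia (p s x y z w : ℝ) (hs : s ≠ 0)
    (e1 : x * p - y * s = p * x + s * z) (e2 : x * s + y * p = p * y + s * w) :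
    z = -y ∧ w = x := by
  constructor <;> apply mul_left_cancel₀ hs <;> linarith

theorem central (p s q t : ℝ) (hs : s ≠ 0) (ht : t ≠ 0) (hd : p ≠ q)
    (g : Matrix (Fin 4) (Fin 4) ℝ) (h : g * tor p s q t = tor p s q t * g) :
    g = tor (g 0 0) (g 0 2) (g 1 1) (g 1 3) := by
  have e : ∀ i j, (g * tor p s q t) i j = (tor p s q t * g) i j := fun i j => by rw [h]
  simp only [Matrix.mul_apply, Fin.sum_univ_four] at e
  obtain ⟨a1, a2, a3, a4⟩ := off p q s t (g 0 1) (g 0 3) (g 2 1) (g 2 3)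
    (sub_ne_zero.mpr hd.symm)
    (by have := e 0 1; simp [tor] at this; linarith)
    (by have := e 0 3; simp [tor] at this; linarith)
    (by have := e 2 1; simp [tor] at this; linarith)
    (by have := e 2 3; simp [tor] at this; linarith)
  obtain ⟨b1, b2, b3, b4⟩ := off q p t s (g 1 0) (g 1 2) (g 3 0) (g 3 2)
    (sub_ne_zero.mpr hd)
    (by have := e 1 0; simp [tor] at this; linarith)
    (by have := e 1 2; simp [tor] at this; linarith)
    (by have := e 3 0; simp [tor] at this; linarith)
    (by have := e 3 2; simp [tor] at this; linarith)
  obtain ⟨c1, c2⟩ := dia p s (g 0 0) (g 0 2) (g 2 0) (g 2 2) hs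
    (by have := e 0 0; simp [tor] at this; linarith)
    (by have := e 0 2; simp [tor] at this; linarith)
  obtain ⟨d1, d2⟩ := dia q t (g 1 1) (g 1 3) (g 3 1) (g 3 3) ht
    (by have := e 1 1; simp [tor] at this; linarith)
    (by have := e 1 3; simp [tor] at this; linarith)
  ext i j
  fin_cases i <;> fin_cases j <;> simp [tor, a1, a2, a3, a4, b1, b2, b3, b4, c1, c2, d1, d2]

theorem angle (a b : ℝ) (h : a ^ 2 + b ^ 2 = 1) : ∃ φ : ℝ, a = cos φ ∧ b = sin φ := by
  have hn : ‖(⟨a, b⟩ : ℂ)‖ = 1 := by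
    rw [← sq_eq_sq₀ (norm_nonneg _) zero_le_one, Complex.sq_norm, Complex.normSq_mk]
    linarith
  have hz : (⟨a, b⟩ : ℂ) ≠ 0 := by
    intro h0
    rw [h0] at hn
    simp at hn
  refine ⟨Complex.arg ⟨a, b⟩, ?_, ?_⟩
  · rw [Complex.cos_arg hz, hn]; simp
  · rw [Complex.sin_arg, hn]; simp

theorem circ (z : Circle) : (z : ℂ).re ^ 2 + (z : ℂ).im ^ 2 = 1 := by
  have := Circle.normSq_coe z
  rw [Complex.normSq_apply] at this
  linarith

theorem char (p s q t : ℝ) (hs : s ≠ 0) (ht : t ≠ 0) (hd : p ≠ q)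
    (g : Matrix (Fin 4) (Fin 4) ℝ) :
    (IsSymp g ∧ g * tor p s q t = tor p s q t * g) ↔
      ∃ a b c d : ℝ, a ^ 2 + b ^ 2 = 1 ∧ c ^ 2 + d ^ 2 = 1 ∧ g = tor a b c d := by
  constructor
  · rintro ⟨h, h'⟩
    have hg := central p s q t hs ht hd g h'
    rw [hg] at h
    obtain ⟨u, v⟩ := tor_symp_inv _ _ _ _ h
    exact ⟨_, _, _, _, u, v, hg⟩
  · rintro ⟨a, b, c, d, u, v, rfl⟩
    refine ⟨tor_symp _ _ _ _ u v, ?_⟩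
    rw [tor_mul, tor_mul]
    congr 1 <;> ring

/-- For a regular elliptic element r(θ₁,θ₂) (sin θ₁ ≠ 0, sin θ₂ ≠ 0,
cos θ₁ ≠ cos θ₂), the centralizer in Sp(4,ℝ) is exactly the full compact
torus {r(φ₁,φ₂)}; in particular it is isomorphic to S¹ × S¹. -/
theorem centralizer_regular_elliptic (θ₁ θ₂ : ℝ)
    (h₁ : Real.sin θ₁ ≠ 0) (h₂ : Real.sin θ₂ ≠ 0) (h₃ : Real.cos θ₁ ≠ Real.cos θ₂) :
    (∀ g : Matrix (Fin 4) (Fin 4) ℝ,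
      (IsSymp g ∧ g * rot θ₁ θ₂ = rot θ₁ θ₂ * g) ↔ ∃ φ₁ φ₂ : ℝ, g = rot φ₁ φ₂) ∧
    (∃ f : Circle × Circle → Matrix (Fin 4) (Fin 4) ℝ,
      (∀ z w : Circle × Circle, f (z * w) = f z * f w) ∧
      Function.Injective f ∧
      Set.range f = {g | IsSymp g ∧ g * rot θ₁ θ₂ = rot θ₁ θ₂ * g}) := by
  simp only [rot_eq, char _ _ _ _ h₁ h₂ h₃]
  refine ⟨fun g => ⟨?_, ?_⟩, fun z => tor (z.1 : ℂ).re (z.1 : ℂ).im (z.2 : ℂ).re (z.2 : ℂ).im,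
    ?_, ?_, ?_⟩
  · rintro ⟨a, b, c, d, u, v, rfl⟩
    obtain ⟨x, rfl, rfl⟩ := angle a b u
    obtain ⟨y, rfl, rfl⟩ := angle c d v
    exact ⟨x, y, rfl⟩
  · rintro ⟨x, y, rfl⟩
    exact ⟨_, _, _, _, Real.cos_sq_add_sin_sq x, Real.cos_sq_add_sin_sq y, rfl⟩
  · intro z w
    rw [tor_mul]
    simp
  · intro z w h
    have e (i j) := congrFun (congrFun h i) j
    have e1 := e 0 0
    have e2 := e 0 2
    have e3 := e 1 1
    have e4 := e 1 3
    simp [tor] at e1 e2 e3 e4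
    exact Prod.ext (Circle.ext (Complex.ext e1 e2)) (Circle.ext (Complex.ext e3 e4))
  · ext g
    constructor
    · rintro ⟨z, rfl⟩
      exact ⟨_, _, _, _, circ z.1, circ z.2, rfl⟩
    · rintro ⟨a, b, c, d, u, v, rfl⟩
      obtain ⟨x, rfl, rfl⟩ := angle a b u
      obtain ⟨y, rfl, rfl⟩ := angle c d v
      refine ⟨(Circle.exp x, Circle.exp y), ?_⟩
      simp [Circle.coe_exp, Complex.exp_ofReal_mul_I_re, Complex.exp_ofReal_mul_I_im]
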